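/- arXiv:2412.16004 — 2 statements merged into one kernel-verified Lean document; each statement's English description precedes it below -/
import Mathlib

section
/- Let A be a Hopf algebra over a commutative ring R equipped with a dual quasitriangular structure 𝓡, with 𝓡⁻¹(a, b) := 𝓡(S(a), b) its convolution inverse, and let ⬝ denote the covariantized product on A. Then for all a, b ∈ A the original product of A is recovered by the formula a b = 𝓡⁻¹(a₍₁₎, b₍₁₎) 𝓡(a₍₃₎, b₍₂₎) (a₍₂₎ ⬝ b₍₃₎) = 𝓡(S(a₍₁₎), b₍₁₎) 𝓡(a₍₃₎, b₍₂₎) (a₍₂₎ ⬝ b₍₃₎) (sums over Sweedler components implicit). -/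
open scoped TensorProduct BigOperators

noncomputable section

universe u

/-- `ρ` is a dual quasitriangular structure on the bialgebra `A`.  All conditions
involving the Sweedler components of the comultiplication are expressed by
quantifying over finite representations of `comul`. -/
def IsDQT {R : Type u} [CommRing R] {A : Type u} [Ring A] [Bialgebra R A]
    (ρ : A →ₗ[R] A →ₗ[R] R) : Prop :=
  (∀ (a b c : A) (s : Finset ℕ) (c1 c2 : ℕ → A),
      Coalgebra.comul (R := R) c = ∑ i ∈ s, c1 i ⊗ₜ[R] c2 i →
      ρ (a * b) c = ∑ i ∈ s, ρ a (c1 i) * ρ b (c2 i)) ∧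
  (∀ (a b c : A) (s : Finset ℕ) (a1 a2 : ℕ → A),
      Coalgebra.comul (R := R) a = ∑ i ∈ s, a1 i ⊗ₜ[R] a2 i →
      ρ a (b * c) = ∑ i ∈ s, ρ (a1 i) c * ρ (a2 i) b) ∧
  (∀ a : A, ρ a 1 = Coalgebra.counit (R := R) a) ∧
  (∀ a : A, ρ 1 a = Coalgebra.counit (R := R) a) ∧
  (∀ (a b : A) (s t : Finset ℕ) (a1 a2 b1 b2 : ℕ → A),
      Coalgebra.comul (R := R) a = ∑ i ∈ s, a1 i ⊗ₜ[R] a2 i →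
      Coalgebra.comul (R := R) b = ∑ j ∈ t, b1 j ⊗ₜ[R] b2 j →
      ∑ i ∈ s, ∑ j ∈ t, ρ (a2 i) (b2 j) • (b1 j * a1 i) =
        ∑ i ∈ s, ∑ j ∈ t, ρ (a1 i) (b1 j) • (a2 i * b2 j))

/-- The twofold comultiplication `a ↦ a₍₁₎ ⊗ (a₍₂₎ ⊗ a₍₃₎)`. -/
def comul2 {R : Type u} [CommRing R] {A : Type u} [Ring A] [Bialgebra R A] :
    A →ₗ[R] A ⊗[R] (A ⊗[R] A) :=
  (TensorProduct.map LinearMap.id (Coalgebra.comul (R := R))).comp (Coalgebra.comul (R := R))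

/-- `cmul` is the covariantized product
`a ⬝ b = a₍₂₎ b₍₃₎ 𝓡(a₍₃₎, S(b₍₁₎)) 𝓡(a₍₁₎, b₍₂₎)` of the dual quasitriangular Hopf
algebra `(A, ρ)`, expressed via finite representations of the iterated
comultiplication. -/
def CovCharS {R : Type u} [CommRing R] {A : Type u} [Ring A] [HopfAlgebra R A]
    (ρ : A →ₗ[R] A →ₗ[R] R) (cmul : A → A → A) : Prop :=
  ∀ (a b : A) (s t : Finset ℕ) (a1 a2 a3 b1 b2 b3 : ℕ → A),
    comul2 (R := R) a = ∑ i ∈ s, a1 i ⊗ₜ[R] (a2 i ⊗ₜ[R] a3 i) →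
    comul2 (R := R) b = ∑ j ∈ t, b1 j ⊗ₜ[R] (b2 j ⊗ₜ[R] b3 j) →
    cmul a b = ∑ i ∈ s, ∑ j ∈ t,
      (ρ (a3 i) (HopfAlgebra.antipode (R := R) (b1 j)) * ρ (a1 i) (b2 j)) • (a2 i * b3 j)

/-!
A bilinear form `σ` on `A × B` acts on bilinear maps out of `A × B` by convolution, on the left or
on the right in the variable from `A`; for fixed `b : B` both actions are operators on maps out of
`A`, and for varying `b` they are elements of the convolution algebra of linear maps from `B` to
those operators. In this algebra covariantization is multiplication of the product map by
`leftTwist 𝓡` and then by `rightTwist 𝓡(·, S ·)`. Since `𝓡` is multiplicative in its first variable,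
`leftTwist 𝓡` is inverted by `leftTwist 𝓡(S ·, ·)`; since it is antimultiplicative in its second
variable, and right actions reverse products once more, `rightTwist 𝓡(·, S ·)` is inverted by
`rightTwist 𝓡`. Undoing the two multiplications gives the formula.
-/

open Coalgebra WithConv MulOpposite

section TensorProduct

variable {R M N P : Type*} [CommSemiring R] [AddCommMonoid M] [Module R M] [AddCommMonoid N]
  [Module R N] [AddCommMonoid P] [Module R P]

lemma exists_nat_sum_eq {ι X : Type*} [Nonempty X] (F : X → M) (s : Finset ι) (f : ι → X) :
    ∃ (t : Finset ℕ) (g : ℕ → X), ∑ i ∈ s, F (f i) = ∑ n ∈ t, F (g n) := by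
  let e : s ↪ ℕ := s.equivFin.toEmbedding.trans Fin.valEmbedding
  refine ⟨Finset.univ.map e,
    Function.extend e (fun i : s ↦ f i) (fun _ ↦ Classical.arbitrary X), ?_⟩
  rw [Finset.sum_map, ← Finset.sum_coe_sort s]
  exact Finset.sum_congr rfl fun i _ ↦ by rw [e.injective.extend_apply]

lemma exists_nat_sum_tmul_eq (x : M ⊗[R] N) :
    ∃ (s : Finset ℕ) (m : ℕ → M) (n : ℕ → N), x = ∑ i ∈ s, m i ⊗ₜ[R] n i := by
  obtain ⟨S, hS⟩ := TensorProduct.exists_finset x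
  obtain ⟨s, g, hg⟩ := exists_nat_sum_eq (fun p : M × N ↦ p.1 ⊗ₜ[R] p.2) S id
  exact ⟨s, fun i ↦ (g i).1, fun i ↦ (g i).2, hS.trans hg⟩

lemma exists_nat_sum_tmul_tmul_eq (x : M ⊗[R] (N ⊗[R] P)) :
    ∃ (s : Finset ℕ) (m : ℕ → M) (n : ℕ → N) (p : ℕ → P),
      x = ∑ i ∈ s, m i ⊗ₜ[R] (n i ⊗ₜ[R] p i) := by
  obtain ⟨S, hS⟩ := TensorProduct.exists_finset x
  choose T hT using TensorProduct.exists_finset (R := R) (M := N) (N := P)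
  have hx : x = ∑ q ∈ S.sigma fun y ↦ T y.2, q.1.1 ⊗ₜ[R] (q.2.1 ⊗ₜ[R] q.2.2) := by
    simp only [Finset.sum_sigma, ← TensorProduct.tmul_sum, ← hT, ← hS]
  obtain ⟨s, g, hg⟩ := exists_nat_sum_eq (fun q : M × N × P ↦ q.1 ⊗ₜ[R] (q.2.1 ⊗ₜ[R] q.2.2))
    (S.sigma fun y ↦ T y.2) fun q ↦ (q.1.1, q.2.1, q.2.2)
  exact ⟨s, fun i ↦ (g i).1, fun i ↦ (g i).2.1, fun i ↦ (g i).2.2, hx.trans hg⟩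

end TensorProduct

section Convolution

variable {R C M N : Type*} [CommSemiring R] [AddCommMonoid C] [Module R C] [Coalgebra R C]
  [Semiring M] [Algebra R M] [Semiring N] [Algebra R N]

lemma convMul_convMul_apply_eq_sum {ι : Type*} (f g h : WithConv (C →ₗ[R] M)) {c : C}
    {s : Finset ι} {c₁ c₂ c₃ : ι → C}
    (hc : comul.lTensor C (comul (R := R) c) = ∑ i ∈ s, c₁ i ⊗ₜ[R] (c₂ i ⊗ₜ[R] c₃ i)) :
    (f * (g * h)) c = ∑ i ∈ s, f (c₁ i) * (g (c₂ i) * h (c₃ i)) := by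
  have hfgh : (f * (g * h)) c = LinearMap.mul' R M (TensorProduct.map f.ofConv
      (LinearMap.mul' R M ∘ₗ TensorProduct.map g.ofConv h.ofConv)
        (comul.lTensor C (comul (R := R) c))) := by
    rw [← LinearMap.comp_apply (TensorProduct.map _ _), LinearMap.map_comp_lTensor]
    rfl
  simp [hfgh, hc]

/-- Postcomposition with an algebra homomorphism, as a homomorphism of convolution algebras. -/
def convMapAlgHom (h : M →ₐ[R] N) : WithConv (C →ₗ[R] M) →ₐ[R] WithConv (C →ₗ[R] N) :=
  .ofLinearMap
    { toFun f := toConv (h.toLinearMap ∘ₗ f.ofConv)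
      map_add' f g := by simp [LinearMap.comp_add]
      map_smul' r f := by simp [LinearMap.comp_smul] }
    (by ext; simp)
    fun f g ↦ WithConv.ext (LinearMap.algHom_comp_convMul_distrib h f g)

@[simp]
lemma convMapAlgHom_apply (h : M →ₐ[R] N) (f : WithConv (C →ₗ[R] M)) (c : C) :
    convMapAlgHom h f c = h (f c) :=
  rfl

variable (R C M) in
/-- The action `(f · φ)(c) = f(c₍₁₎) φ(c₍₂₎)` of the dual of a coalgebra on `M`-valued maps. -/
def leftCoregular : WithConv (C →ₗ[R] R) →ₐ[R] Module.End R (WithConv (C →ₗ[R] M)) :=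
  (Algebra.lmul R _).comp (convMapAlgHom (Algebra.ofId R M))

variable (R C M) in
/-- The action `(φ · f)(c) = φ(c₍₁₎) f(c₍₂₎)` of the dual of a coalgebra on `M`-valued maps; as a
right action, it is a homomorphism from the opposite algebra. -/
def rightCoregular : (WithConv (C →ₗ[R] R))ᵐᵒᵖ →ₐ[R] Module.End R (WithConv (C →ₗ[R] M)) :=
  (Algebra.lsmul R R _).comp (AlgHom.op (convMapAlgHom (Algebra.ofId R M)))

lemma leftCoregular_rightCoregular_apply_eq_sum {ι : Type*} (f g : WithConv (C →ₗ[R] R))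
    (φ : WithConv (C →ₗ[R] M)) {c : C} {s : Finset ι} {c₁ c₂ c₃ : ι → C}
    (hc : comul.lTensor C (comul (R := R) c) = ∑ i ∈ s, c₁ i ⊗ₜ[R] (c₂ i ⊗ₜ[R] c₃ i)) :
    leftCoregular R C M f (rightCoregular R C M (op g) φ) c =
      ∑ i ∈ s, (f (c₁ i) * g (c₃ i)) • φ (c₂ i) := by
  refine (convMul_convMul_apply_eq_sum (convMapAlgHom (Algebra.ofId R M) f) φ
    (convMapAlgHom (Algebra.ofId R M) g) hc).trans (Finset.sum_congr rfl fun i _ ↦ ?_)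
  simp [Algebra.ofId_apply, ← Algebra.commutes (g (c₃ i)), ← Algebra.smul_def, mul_smul,
    smul_comm (f (c₁ i))]

lemma rightCoregular_leftCoregular (f g : WithConv (C →ₗ[R] R)) (φ : WithConv (C →ₗ[R] M)) :
    rightCoregular R C M (op g) (leftCoregular R C M f φ) =
      leftCoregular R C M f (rightCoregular R C M (op g) φ) :=
  mul_assoc (convMapAlgHom (Algebra.ofId R M) f) φ (convMapAlgHom (Algebra.ofId R M) g)

end Convolution

section HopfAlgebra

variable {R A E : Type*} [CommSemiring R] [Semiring A] [HopfAlgebra R A] [Semiring E] [Algebra R E]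

lemma convMul_comp_antipode (f : A →ₐ[R] E) :
    toConv f.toLinearMap * toConv (f.toLinearMap ∘ₗ HopfAlgebra.antipode R) = 1 := by
  have h := congrArg (convMapAlgHom f) (LinearMap.id_mul_antipode (R := R) (C := A))
  rwa [map_mul, map_one] at h

lemma comp_antipode_convMul (f : A →ₐ[R] E) :
    toConv (f.toLinearMap ∘ₗ HopfAlgebra.antipode R) * toConv f.toLinearMap = 1 := by
  have h := congrArg (convMapAlgHom f) (LinearMap.antipode_mul_id (R := R) (C := A))
  rwa [map_mul, map_one] at h

end HopfAlgebra

section Bilinear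

variable {R A B M : Type*} [CommSemiring R] [AddCommMonoid A] [Module R A] [AddCommMonoid B]
  [Module R B] [Semiring M] [Algebra R M]

/-- A bilinear map, seen as an element of an iterated convolution algebra. -/
def convCurry (σ : A →ₗ[R] B →ₗ[R] M) : WithConv (A →ₗ[R] WithConv (B →ₗ[R] M)) :=
  toConv ((WithConv.linearEquiv R _).symm.toLinearMap ∘ₗ σ)

@[simp]
lemma convCurry_apply (σ : A →ₗ[R] B →ₗ[R] M) (a : A) : convCurry σ a = toConv (σ a) :=
  rfl

variable [Coalgebra R A]

variable (M) in
/-- The family, indexed by `b`, of operators sending `φ` to `a ↦ φ(a₍₁₎) σ(a₍₂₎, b)`. Convolution by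
it twists `T(a, b)` into `σ(a₍₂₎, b₍₁₎) T(a₍₁₎, b₍₂₎)`. -/
def rightTwist (σ : A →ₗ[R] B →ₗ[R] R) :
    WithConv (B →ₗ[R] Module.End R (WithConv (A →ₗ[R] M))) :=
  toConv ((rightCoregular R A M).toLinearMap ∘ₗ (opLinearEquiv R).toLinearMap ∘ₗ
    (convCurry σ.flip).ofConv)

lemma rightTwist_apply (σ : A →ₗ[R] B →ₗ[R] R) (b : B) :
    rightTwist M σ b = rightCoregular R A M (op (toConv (σ.flip b))) :=
  rfl

variable [Coalgebra R B]

lemma convCurry_flip_mul_eq_one {σ τ : A →ₗ[R] B →ₗ[R] M}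
    (h : convCurry σ * convCurry τ = 1) : convCurry σ.flip * convCurry τ.flip = 1 := by
  ext b a
  have hab := congr($h a b)
  simp only [(ℛ R a).convMul_apply, (ℛ R b).convMul_apply, ofConv_sum, LinearMap.sum_apply,
    convCurry_apply, LinearMap.flip_apply] at hab ⊢
  rw [Finset.sum_comm, hab]
  simp [Algebra.algebraMap_eq_smul_one, smul_smul, mul_comm]

variable (M) in
/-- The family, indexed by `b`, of operators sending `φ` to `a ↦ σ(a₍₁₎, b) φ(a₍₂₎)`. Convolution by
it twists `T(a, b)` into `σ(a₍₁₎, b₍₁₎) T(a₍₂₎, b₍₂₎)`. -/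
def leftTwist (σ : A →ₗ[R] B →ₗ[R] R) :
    WithConv (B →ₗ[R] Module.End R (WithConv (A →ₗ[R] M))) :=
  convMapAlgHom (leftCoregular R A M) (convCurry σ.flip)

lemma leftTwist_apply (σ : A →ₗ[R] B →ₗ[R] R) (b : B) :
    leftTwist M σ b = leftCoregular R A M (toConv (σ.flip b)) :=
  rfl

variable {ι κ : Type*} {a : A} {b : B} {s : Finset ι} {t : Finset κ} {a₁ a₂ a₃ : ι → A}
  {b₁ b₂ b₃ : κ → B}

lemma leftTwist_mul_rightTwist_mul_apply_eq_sum (σ τ : A →ₗ[R] B →ₗ[R] R)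
    (T : WithConv (B →ₗ[R] Module.End R (WithConv (A →ₗ[R] M)))) (φ : WithConv (A →ₗ[R] M))
    (ha : comul.lTensor A (comul (R := R) a) = ∑ i ∈ s, a₁ i ⊗ₜ[R] (a₂ i ⊗ₜ[R] a₃ i))
    (hb : comul.lTensor B (comul (R := R) b) = ∑ j ∈ t, b₁ j ⊗ₜ[R] (b₂ j ⊗ₜ[R] b₃ j)) :
    (leftTwist M σ * (rightTwist M τ * T)) b φ a =
      ∑ i ∈ s, ∑ j ∈ t, (σ (a₁ i) (b₁ j) * τ (a₃ i) (b₂ j)) • T (b₃ j) φ (a₂ i) := by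
  rw [convMul_convMul_apply_eq_sum _ _ _ hb, LinearMap.sum_apply, ofConv_sum, LinearMap.sum_apply,
    Finset.sum_comm]
  refine Finset.sum_congr rfl fun j _ ↦ ?_
  rw [leftTwist_apply, rightTwist_apply, Module.End.mul_apply, Module.End.mul_apply,
    leftCoregular_rightCoregular_apply_eq_sum _ _ _ ha]
  simp

lemma rightTwist_mul_leftTwist_mul_apply_eq_sum (σ τ : A →ₗ[R] B →ₗ[R] R)
    (T : WithConv (B →ₗ[R] Module.End R (WithConv (A →ₗ[R] M)))) (φ : WithConv (A →ₗ[R] M))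
    (ha : comul.lTensor A (comul (R := R) a) = ∑ i ∈ s, a₁ i ⊗ₜ[R] (a₂ i ⊗ₜ[R] a₃ i))
    (hb : comul.lTensor B (comul (R := R) b) = ∑ j ∈ t, b₁ j ⊗ₜ[R] (b₂ j ⊗ₜ[R] b₃ j)) :
    (rightTwist M σ * (leftTwist M τ * T)) b φ a =
      ∑ i ∈ s, ∑ j ∈ t, (σ (a₃ i) (b₁ j) * τ (a₁ i) (b₂ j)) • T (b₃ j) φ (a₂ i) := by
  rw [convMul_convMul_apply_eq_sum _ _ _ hb, LinearMap.sum_apply, ofConv_sum, LinearMap.sum_apply,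
    Finset.sum_comm]
  refine Finset.sum_congr rfl fun j _ ↦ ?_
  rw [leftTwist_apply, rightTwist_apply, Module.End.mul_apply, Module.End.mul_apply,
    rightCoregular_leftCoregular, leftCoregular_rightCoregular_apply_eq_sum _ _ _ ha]
  simp [mul_comm (σ _ _)]

end Bilinear

section SkewPairing

variable {R A B : Type*} [CommSemiring R] [Semiring A] [Semiring B]

/-- A skew pairing of bialgebras: a bilinear form `ρ` on `A × B` such that `a ↦ ρ(a, ·)` is an
algebra homomorphism from `A` to the dual of `B`, and `b ↦ ρ(·, b)` is an algebra antihomomorphism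
from `B` to the dual of `A`. -/
structure IsSkewPairing [Bialgebra R A] [Bialgebra R B] (ρ : A →ₗ[R] B →ₗ[R] R) : Prop where
  map_one : convCurry ρ 1 = 1
  map_mul (a a' : A) : convCurry ρ (a * a') = convCurry ρ a * convCurry ρ a'
  flip_map_one : convCurry ρ.flip 1 = 1
  flip_map_mul (b b' : B) : convCurry ρ.flip (b * b') = convCurry ρ.flip b' * convCurry ρ.flip b

namespace IsSkewPairing

variable (M : Type*) [Semiring M] [Algebra R M]

lemma leftTwist_antipode_mul_leftTwist [HopfAlgebra R A] [Bialgebra R B]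
    {ρ : A →ₗ[R] B →ₗ[R] R} (hρ : IsSkewPairing ρ) :
    leftTwist M (ρ ∘ₗ HopfAlgebra.antipode R) * leftTwist M ρ = 1 := by
  let ρHom : A →ₐ[R] WithConv (B →ₗ[R] R) :=
    .ofLinearMap (convCurry ρ).ofConv hρ.map_one hρ.map_mul
  have hinv : convCurry (ρ ∘ₗ HopfAlgebra.antipode R) * convCurry ρ = 1 :=
    comp_antipode_convMul ρHom
  rw [leftTwist, leftTwist, ← _root_.map_mul, convCurry_flip_mul_eq_one hinv, _root_.map_one]

lemma rightTwist_mul_rightTwist_antipode [Bialgebra R A] [HopfAlgebra R B]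
    {ρ : A →ₗ[R] B →ₗ[R] R} (hρ : IsSkewPairing ρ) :
    rightTwist M ρ * rightTwist M (ρ.compl₂ (HopfAlgebra.antipode R)) = 1 := by
  let ρFlipHom : B →ₐ[R] (WithConv (A →ₗ[R] R))ᵐᵒᵖ :=
    .ofLinearMap ((opLinearEquiv R).toLinearMap ∘ₗ (convCurry ρ.flip).ofConv)
      (congrArg op hρ.flip_map_one) fun b b' ↦ congrArg op (hρ.flip_map_mul b b')
  exact convMul_comp_antipode ((rightCoregular R A M).comp ρFlipHom)

lemma untwist_twist [HopfAlgebra R A] [HopfAlgebra R B] {ρ : A →ₗ[R] B →ₗ[R] R}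
    (hρ : IsSkewPairing ρ)
    (T : WithConv (B →ₗ[R] Module.End R (WithConv (A →ₗ[R] M)))) :
    leftTwist M (ρ ∘ₗ HopfAlgebra.antipode R) * (rightTwist M ρ *
      (rightTwist M (ρ.compl₂ (HopfAlgebra.antipode R)) * (leftTwist M ρ * T))) = T := by
  rw [← mul_assoc (rightTwist M ρ), hρ.rightTwist_mul_rightTwist_antipode M, one_mul, ← mul_assoc,
    hρ.leftTwist_antipode_mul_leftTwist M, one_mul]

end IsSkewPairing

end SkewPairing

lemma IsDQT.isSkewPairing {R A : Type u} [CommRing R] [Ring A] [Bialgebra R A]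
    {ρ : A →ₗ[R] A →ₗ[R] R} (hρ : IsDQT ρ) : IsSkewPairing ρ := by
  obtain ⟨hmul, hflip_mul, hflip_one, hone, -⟩ := hρ
  refine ⟨WithConv.ext (LinearMap.ext hone), fun a a' ↦ ?_, WithConv.ext (LinearMap.ext hflip_one),
    fun b b' ↦ ?_⟩
  · ext c
    obtain ⟨s, c₁, c₂, hc⟩ := exists_nat_sum_tmul_eq (comul (R := R) c)
    simp [hmul a a' c s c₁ c₂ hc, hc]
  · ext c
    obtain ⟨s, c₁, c₂, hc⟩ := exists_nat_sum_tmul_eq (comul (R := R) c)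
    simp [hflip_mul c b b' s c₁ c₂ hc, hc]

theorem mul_eq_covariantized_twist_general {R A B M : Type*} [CommSemiring R] [Semiring A]
    [HopfAlgebra R A] [Semiring B] [HopfAlgebra R B] [AddCommMonoid M] [Module R M]
    {ρ : A →ₗ[R] B →ₗ[R] R} (hρ : IsSkewPairing ρ) (μ : A →ₗ[R] B →ₗ[R] M) (cmul : A → B → M)
    (hcmul : ∀ (a : A) (b : B) (s t : Finset ℕ) (a₁ a₂ a₃ : ℕ → A) (b₁ b₂ b₃ : ℕ → B),
      comul.lTensor A (comul (R := R) a) = ∑ i ∈ s, a₁ i ⊗ₜ[R] (a₂ i ⊗ₜ[R] a₃ i) →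
      comul.lTensor B (comul (R := R) b) = ∑ j ∈ t, b₁ j ⊗ₜ[R] (b₂ j ⊗ₜ[R] b₃ j) →
      cmul a b = ∑ i ∈ s, ∑ j ∈ t,
        (ρ (a₃ i) (HopfAlgebra.antipode R (b₁ j)) * ρ (a₁ i) (b₂ j)) • μ (a₂ i) (b₃ j))
    {ι κ : Type*} {a : A} {b : B} {s : Finset ι} {t : Finset κ} {a₁ a₂ a₃ : ι → A}
    {b₁ b₂ b₃ : κ → B}
    (ha : comul.lTensor A (comul (R := R) a) = ∑ i ∈ s, a₁ i ⊗ₜ[R] (a₂ i ⊗ₜ[R] a₃ i))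
    (hb : comul.lTensor B (comul (R := R) b) = ∑ j ∈ t, b₁ j ⊗ₜ[R] (b₂ j ⊗ₜ[R] b₃ j)) :
    μ a b = ∑ i ∈ s, ∑ j ∈ t,
      (ρ (HopfAlgebra.antipode R (a₁ i)) (b₁ j) * ρ (a₃ i) (b₂ j)) • cmul (a₂ i) (b₃ j) := by
  -- Splitting `μ` as `TensorProduct.lift μ` after `TensorProduct.mk` makes the target of the
  -- convolution algebras an algebra, although `M` is only a module.
  let I : WithConv (B →ₗ[R] Module.End R (WithConv (A →ₗ[R] A ⊗[R] B))) :=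
    convMapAlgHom (Algebra.lmul R _) (convCurry (TensorProduct.mk R A B).flip)
  let T := rightTwist (A ⊗[R] B) (ρ.compl₂ (HopfAlgebra.antipode R)) *
    (leftTwist (A ⊗[R] B) ρ * I)
  have hI (a : A) (b : B) : I b 1 a = a ⊗ₜ[R] b := by simp [I]
  have hT (a : A) (b : B) : cmul a b = TensorProduct.lift μ (T b 1 a) := by
    obtain ⟨s, a₁, a₂, a₃, ha⟩ := exists_nat_sum_tmul_tmul_eq (comul.lTensor A (comul (R := R) a))
    obtain ⟨t, b₁, b₂, b₃, hb⟩ := exists_nat_sum_tmul_tmul_eq (comul.lTensor B (comul (R := R) b))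
    rw [rightTwist_mul_leftTwist_mul_apply_eq_sum _ _ _ _ ha hb, hcmul _ _ _ _ _ _ _ _ _ _ ha hb]
    simp [hI]
  calc
    μ a b = TensorProduct.lift μ (I b 1 a) := by simp [hI]
    _ = TensorProduct.lift μ ((leftTwist (A ⊗[R] B) (ρ ∘ₗ HopfAlgebra.antipode R) *
        (rightTwist (A ⊗[R] B) ρ * T)) b 1 a) := by rw [hρ.untwist_twist (A ⊗[R] B)]
    _ = _ := by
      rw [leftTwist_mul_rightTwist_mul_apply_eq_sum _ _ _ _ ha hb]
      simp [hT]

/-- For a dual quasitriangular Hopf algebra `(A, 𝓡)` with covariantized product `⬝`,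
the original product is recovered by
`a b = 𝓡⁻¹(a₍₁₎, b₍₁₎) 𝓡(a₍₃₎, b₍₂₎) (a₍₂₎ ⬝ b₍₃₎) = 𝓡(S(a₍₁₎), b₍₁₎) 𝓡(a₍₃₎, b₍₂₎) (a₍₂₎ ⬝ b₍₃₎)`,
where `𝓡⁻¹(a, b) = 𝓡(S(a), b)` is the convolution inverse of `𝓡`. -/
theorem mul_eq_covariantized_twist
    {R : Type u} [CommRing R] {A : Type u} [Ring A] [HopfAlgebra R A]
    (ρ : A →ₗ[R] A →ₗ[R] R) (hρ : IsDQT ρ)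
    (cmul : A → A → A) (hcmul : CovCharS ρ cmul) :
    ∀ (a b : A) (s t : Finset ℕ) (a1 a2 a3 b1 b2 b3 : ℕ → A),
      comul2 (R := R) a = ∑ i ∈ s, a1 i ⊗ₜ[R] (a2 i ⊗ₜ[R] a3 i) →
      comul2 (R := R) b = ∑ j ∈ t, b1 j ⊗ₜ[R] (b2 j ⊗ₜ[R] b3 j) →
      a * b = ∑ i ∈ s, ∑ j ∈ t,
        (ρ (HopfAlgebra.antipode (R := R) (a1 i)) (b1 j) * ρ (a3 i) (b2 j)) •
          cmul (a2 i) (b3 j) := by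
  intro a b s t a1 a2 a3 b1 b2 b3
  exact mul_eq_covariantized_twist_general hρ.isSkewPairing (LinearMap.mul R A) cmul hcmul

end
end

section
/- Let n ≥ 2 and R a commutative ring with invertible element q^{1/n}, q := (q^{1/n})^n. In the common underlying R-module of O_q(M_n) and B_q(M_n), for all 1 ≤ k, l ≤ n with k ≠ l and every integer N ≥ 0: (x^k_l)^N = q^{−N(N−1)/2} (x^k_l)^{⬝N}, where (x^k_l)^N is the N-th power with respect to the original product of O_q(M_n) and (x^k_l)^{⬝N} is the N-th power with respect to the covariantized product ⬝. -/
open scoped TensorProduct BigOperators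

noncomputable section

universe u

/-- Integer power `q^m` of an invertible element `qq` of `R`, as an element of `R`. -/
def qzpow {R : Type u} [CommRing R] (qq : Rˣ) (m : ℤ) : R := ((qq ^ m : Rˣ) : R)

/-- The defining relations of the `q`-matrix bialgebra `O_q(M_n)` for a family
`y i j` (the image of the generator `x^i_j`; the first index is the upper one). -/
def OqMnRels {R : Type u} [CommRing R] {B : Type u} [Ring B] [Algebra R B]
    (n : ℕ) (qq : Rˣ) (y : Fin n → Fin n → B) : Prop :=
  (∀ i j k : Fin n, j < k → y i k * y i j = (qq : R) • (y i j * y i k)) ∧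
  (∀ i j k : Fin n, j < k → y k i * y j i = (qq : R) • (y j i * y k i)) ∧
  (∀ i j k l : Fin n, i < j → k < l → y i l * y j k = y j k * y i l) ∧
  (∀ i j k l : Fin n, i < j → k < l →
    y j l * y i k - y i k * y j l = ((qq : R) - ((qq⁻¹ : Rˣ) : R)) • (y i l * y j k))

/-- `ρt` is the convolution inverse of `ρ` in `Hom(A ⊗ A^cop, R)`. -/
def IsCopConvInv {R : Type u} [CommRing R] {A : Type u} [Ring A] [Bialgebra R A]
    (ρ ρt : A →ₗ[R] A →ₗ[R] R) : Prop :=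
  ∀ (a b : A) (s t : Finset ℕ) (a1 a2 b1 b2 : ℕ → A),
    Coalgebra.comul (R := R) a = ∑ i ∈ s, a1 i ⊗ₜ[R] a2 i →
    Coalgebra.comul (R := R) b = ∑ j ∈ t, b1 j ⊗ₜ[R] b2 j →
    (∑ i ∈ s, ∑ j ∈ t, ρt (a1 i) (b2 j) * ρ (a2 i) (b1 j)
        = Coalgebra.counit (R := R) a * Coalgebra.counit (R := R) b) ∧
    (∑ i ∈ s, ∑ j ∈ t, ρ (a1 i) (b2 j) * ρt (a2 i) (b1 j)
        = Coalgebra.counit (R := R) a * Coalgebra.counit (R := R) b)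

/-- `cmul` is the covariantized (reflection equation) product
`a ⬝ b = a₍₂₎ b₍₃₎ 𝓡̃(a₍₃₎, b₍₁₎) 𝓡(a₍₁₎, b₍₂₎)` built from `ρ` and its
convolution inverse `ρt` in `Hom(A ⊗ A^cop, R)`, expressed via finite
representations of the iterated comultiplication. -/
def CovChar {R : Type u} [CommRing R] {A : Type u} [Ring A] [Bialgebra R A]
    (ρ ρt : A →ₗ[R] A →ₗ[R] R) (cmul : A → A → A) : Prop :=
  ∀ (a b : A) (s t : Finset ℕ) (a1 a2 a3 b1 b2 b3 : ℕ → A),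
    comul2 (R := R) a = ∑ i ∈ s, a1 i ⊗ₜ[R] (a2 i ⊗ₜ[R] a3 i) →
    comul2 (R := R) b = ∑ j ∈ t, b1 j ⊗ₜ[R] (b2 j ⊗ₜ[R] b3 j) →
    cmul a b = ∑ i ∈ s, ∑ j ∈ t, (ρt (a3 i) (b1 j) * ρ (a1 i) (b2 j)) • (a2 i * b3 j)

/-- The value `𝓡(x^i_j, x^k_l)` of the standard dual quasitriangular structure of
`O_q(M_n)`, where `qr = q^{1/n}` is the chosen `n`-th root of `q = qr^n`:
`𝓡(x^i_j, x^k_l) = q^{−1/n} (δ^i_j δ^k_l q^{δ^j_l} + (q − q^{−1}) δ_{j>l} δ^i_l δ^k_j)`. -/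
def RmatVal {R : Type u} [CommRing R] (n : ℕ) (qr : Rˣ) (i j k l : Fin n) : R :=
  ((qr⁻¹ : Rˣ) : R) *
    ((if i = j then 1 else 0) * (if k = l then 1 else 0) *
        (if j = l then ((qr ^ n : Rˣ) : R) else 1)
      + (((qr ^ n : Rˣ) : R) - (((qr ^ n)⁻¹ : Rˣ) : R)) * (if l < j then 1 else 0) *
          (if i = l then 1 else 0) * (if k = j then 1 else 0))

/-- Product of a nonempty list under a binary operation, bracketed to the right. -/
def cchain {A : Type u} (cmul : A → A → A) : A → List A → A
  | a, [] => a
  | a, b :: l => cmul a (cchain cmul b l)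

/-- Product of a list under the binary operation `cmul`, equal to `one` on the empty
list (and not otherwise using `one`). -/
def cListProd {A : Type u} (cmul : A → A → A) (one : A) : List A → A
  | [] => one
  | a :: l => cchain cmul a l

/-- `N`-th power with respect to the binary operation `cmul`. -/
def cpow {A : Type u} (cmul : A → A → A) (one : A) (a : A) (N : ℕ) : A :=
  cListProd cmul one (List.replicate N a)

/-!
The linear forms `ρ(x^i_j, ·)` and `ρt(x^i_j, ·)` act on the bialgebra by `b ↦ f(b₍₁₎) b₍₂₎`, and
these operators form two matrices, `L` and `L'`, with `L' * L = 1`. In these terms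
`x^k_l ⬝ b = ∑_{m, p} x^m_p * L^k_m (L'^p_l b)`. If column `l` of `L` is diagonal on `b` with value
`c`, then column `l` of `L'` is diagonal on `b` with value `c⁻¹`; if moreover row `k` of `L` is
diagonal on `b` with value `d`, then only the summand `x^k_l * b` survives, with coefficient
`c⁻¹ d`.

The matrix coproduct makes these diagonal values multiplicative in `b`. For `b = x^k_l` with `k ≠ l`
they are `c = q^{-1/n}` and `d = q^{-1/n} q`, so `x^k_l ⬝ (x^k_l)^N = q^N (x^k_l)^{N+1}`, and the
exponents `0, 1, …, N - 1` add up to `N(N-1)/2`.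
-/

section CoregularAction

open Coalgebra WithConv

variable {R C : Type*} [CommSemiring R] [AddCommMonoid C] [Module R C] [Coalgebra R C]

/-- The right coregular action of linear forms on a coalgebra, `f ↦ (b ↦ f(b₍₁₎) b₍₂₎)`. -/
def coregularAct : (C →ₗ[R] R) →ₗ[R] Module.End R C where
  toFun f := (TensorProduct.lid R C).toLinearMap ∘ₗ f.rTensor C ∘ₗ comul
  map_add' f g := by simp [LinearMap.rTensor_add, LinearMap.add_comp, LinearMap.comp_add]
  map_smul' r f := by simp [LinearMap.rTensor_smul, LinearMap.smul_comp, LinearMap.comp_smul]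

theorem coregularAct_apply (f : C →ₗ[R] R) (b : C) :
    coregularAct f b = TensorProduct.lid R C (f.rTensor C (comul b)) := rfl

theorem coregularAct_eq_sum {ι : Type*} {s : Finset ι} {b : C} {b1 b2 : ι → C}
    (hb : comul (R := R) b = ∑ i ∈ s, b1 i ⊗ₜ[R] b2 i) (f : C →ₗ[R] R) :
    coregularAct f b = ∑ i ∈ s, f (b1 i) • b2 i := by
  simp [coregularAct_apply, hb]

theorem coregularAct_counit : coregularAct (counit (R := R) (A := C)) = 1 := by
  ext b
  simp [coregularAct_apply]

theorem coregularAct_convMul (f g : C →ₗ[R] R) :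
    coregularAct (toConv f * toConv g).ofConv = coregularAct g * coregularAct f := by
  ext b
  let contract : C ⊗[R] (C ⊗[R] C) →ₗ[R] C :=
    (TensorProduct.lid R C).toLinearMap ∘ₗ g.rTensor C ∘ₗ
      (TensorProduct.lid R (C ⊗[R] C)).toLinearMap ∘ₗ f.rTensor (C ⊗[R] C)
  have hcoassoc := congr(contract $(sum_tmul_tmul_eq (ℛ R b)
    (fun i ↦ ℛ R ((ℛ R b).left i)) (fun i ↦ ℛ R ((ℛ R b).right i))))
  simp_rw [Module.End.mul_apply, coregularAct_eq_sum (ℛ R b).eq.symm, map_sum, map_smul]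
  simpa [contract, coregularAct_eq_sum (ℛ R _).eq.symm,
    (ℛ R _).convMul_apply, Finset.sum_smul, Finset.smul_sum, smul_smul, mul_comm] using hcoassoc

end CoregularAction

section ColumnEigenvector

variable {R V ι : Type*} [CommSemiring R] [AddCommMonoid V] [Module R V] [DecidableEq ι]

/-- `b` is an eigenvector of the `j`-th column of the operator matrix `M`: the diagonal entry of
that column acts on `b` by the scalar `c`, and the other entries annihilate `b`. Rows are treated
as columns of the transpose, and `b = 0` is allowed. -/
def IsColumnEigenvector (M : Matrix ι ι (Module.End R V)) (j : ι) (c : R) (b : V) : Prop :=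
  ∀ i, M i j b = if i = j then c • b else 0

namespace IsColumnEigenvector

variable {M M' : Matrix ι ι (Module.End R V)} {j : ι} {b : V}

theorem smul {c : R} (h : IsColumnEigenvector M j c b) (r : R) :
    IsColumnEigenvector M j c (r • b) := fun i ↦ by
  rw [map_smul, h i, smul_ite, smul_zero, smul_comm]

theorem of_mul_eq_one [Fintype ι] {c : Rˣ} (hM : M' * M = 1)
    (h : IsColumnEigenvector M j (c : R) b) : IsColumnEigenvector M' j (↑c⁻¹ : R) b := fun i ↦ by
  have hentry : (c : R) • M' i j b = if i = j then b else 0 := by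
    have hij := congr($hM i j b)
    simp only [Matrix.mul_apply, LinearMap.sum_apply, Module.End.mul_apply, h _, apply_ite (M' i _),
      map_smul, map_zero, Finset.sum_ite_eq', Finset.mem_univ, if_true, Matrix.one_apply] at hij
    rw [hij]
    split_ifs <;> rfl
  have := congr((↑c⁻¹ : R) • $hentry)
  simpa [smul_smul] using this

end IsColumnEigenvector

end ColumnEigenvector

section MultiplicativeMatrix

open Coalgebra

/-- A multiplicative matrix (in Manin's sense) over a coalgebra: the entries satisfy
`Δ(x^i_j) = ∑ₖ x^i_k ⊗ x^k_j` and `ε(x^i_j) = δ^i_j`. -/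
structure IsMultiplicativeMatrix (R : Type*) {C ι : Type*} [CommSemiring R] [AddCommMonoid C]
    [Module R C] [CoalgebraStruct R C] [Fintype ι] [DecidableEq ι] (x : Matrix ι ι C) : Prop where
  comul_apply (i j : ι) : comul (R := R) (x i j) = ∑ k, x i k ⊗ₜ[R] x k j
  counit_apply (i j : ι) : counit (R := R) (x i j) = if i = j then 1 else 0

/-- The matrix of operators `b ↦ σ(x^i_j, b₍₁₎) b₍₂₎`, built from a bilinear form `σ` and a matrix
`x` over a coalgebra. -/
def coregularMatrix {R C ι : Type*} [CommSemiring R] [AddCommMonoid C] [Module R C] [Coalgebra R C]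
    (σ : C →ₗ[R] C →ₗ[R] R) (x : Matrix ι ι C) : Matrix ι ι (Module.End R C) :=
  x.map fun a ↦ coregularAct (σ a)

theorem IsMultiplicativeMatrix.coregularMatrix_apply_apply {R C ι : Type*} [CommSemiring R]
    [AddCommMonoid C] [Module R C] [Coalgebra R C] [Fintype ι] [DecidableEq ι] {x : Matrix ι ι C}
    (hx : IsMultiplicativeMatrix R x) (σ : C →ₗ[R] C →ₗ[R] R) (i j k l : ι) :
    coregularMatrix σ x i j (x k l) = ∑ m, σ (x i j) (x k m) • x m l :=
  coregularAct_eq_sum (hx.comul_apply k l) _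

end MultiplicativeMatrix

theorem cpow_succ {A : Type u} {cmul : A → A → A} {one a : A}
    (hone : cmul a one = a) (N : ℕ) : cpow cmul one a (N + 1) = cmul a (cpow cmul one a N) := by
  cases N with
  | zero => exact hone.symm
  | succ N => rfl

section DualQuasitriangular

open Coalgebra WithConv
open scoped Matrix

variable {R : Type u} [CommRing R] {A : Type u} [Ring A] [Bialgebra R A]
  {ρ ρt : A →ₗ[R] A →ₗ[R] R} {ι : Type*} [Fintype ι]

theorem IsDQT.apply_mul_eq_sum (hρ : IsDQT ρ) {a : A} {a1 a2 : ι → A}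
    (ha : comul (R := R) a = ∑ i, a1 i ⊗ₜ[R] a2 i) (b c : A) :
    ρ a (b * c) = ∑ i, ρ (a1 i) c * ρ (a2 i) b := by
  obtain ⟨e, he⟩ := Countable.exists_injective_nat ι
  have h := hρ.2.1 a b c (Finset.univ.map ⟨e, he⟩) (Function.extend e a1 0)
    (Function.extend e a2 0)
  simp only [Finset.sum_map, Function.Embedding.coeFn_mk, he.extend_apply] at h
  exact h ha

theorem IsDQT.coregularAct_mul (hρ : IsDQT ρ) {a : A} {a1 a2 : ι → A}
    (ha : comul (R := R) a = ∑ i, a1 i ⊗ₜ[R] a2 i) (b c : A) :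
    coregularAct (ρ a) (b * c) = ∑ i, coregularAct (ρ (a2 i)) b * coregularAct (ρ (a1 i)) c := by
  have hbc : comul (R := R) (b * c) = ∑ p ∈ (ℛ R b).index ×ˢ (ℛ R c).index,
      ((ℛ R b).left p.1 * (ℛ R c).left p.2) ⊗ₜ[R] ((ℛ R b).right p.1 * (ℛ R c).right p.2) := by
    simp [← (ℛ R b).eq, ← (ℛ R c).eq, Finset.sum_mul_sum, Finset.sum_product]
  simp_rw [coregularAct_eq_sum hbc, coregularAct_eq_sum (ℛ R b).eq.symm,
    coregularAct_eq_sum (ℛ R c).eq.symm, hρ.apply_mul_eq_sum ha, Finset.sum_mul_sum,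
    Finset.sum_smul, smul_mul_smul_comm, Finset.sum_product]
  simp_rw [Finset.sum_comm (t := Finset.univ), mul_comm]

theorem IsDQT.coregularAct_one (hρ : IsDQT ρ) (a : A) :
    coregularAct (ρ a) 1 = counit (R := R) a • (1 : A) := by
  simp [coregularAct_apply, Algebra.TensorProduct.one_def, hρ.2.2.1]

theorem IsCopConvInv.sum_convMul (hρt : IsCopConvInv ρ ρt) {a : A} {a1 a2 : ι → A}
    (ha : comul (R := R) a = ∑ i, a1 i ⊗ₜ[R] a2 i) :
    ∑ i, (toConv (ρ (a2 i)) * toConv (ρt (a1 i))).ofConv = counit (R := R) a • counit := by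
  ext b
  obtain ⟨k, b1, b2, hb⟩ := TensorProduct.exists_sum_tmul_eq (comul (R := R) b)
  obtain ⟨e, he⟩ := Countable.exists_injective_nat ι
  obtain ⟨d, hd⟩ := Countable.exists_injective_nat (Fin k)
  have h := hρt a b (Finset.univ.map ⟨e, he⟩) (Finset.univ.map ⟨d, hd⟩) (Function.extend e a1 0)
    (Function.extend e a2 0) (Function.extend d b1 0) (Function.extend d b2 0)
  simp only [Finset.sum_map, Function.Embedding.coeFn_mk, he.extend_apply, hd.extend_apply] at h
  simpa [hb, mul_comm] using (h ha hb).1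

variable [DecidableEq ι] {x : Matrix ι ι A}

theorem IsDQT.coregularMatrix_mul (hρ : IsDQT ρ) (hx : IsMultiplicativeMatrix R x) (i j : ι)
    (b c : A) :
    coregularMatrix ρ x i j (b * c) =
      ∑ m, coregularMatrix ρ x m j b * coregularMatrix ρ x i m c :=
  hρ.coregularAct_mul (hx.comul_apply i j) b c

theorem IsDQT.coregularMatrix_one (hρ : IsDQT ρ) (hx : IsMultiplicativeMatrix R x) (i j : ι) :
    coregularMatrix ρ x i j 1 = if i = j then 1 else 0 := by
  rw [coregularMatrix, Matrix.map_apply, hρ.coregularAct_one, hx.counit_apply, ite_smul, one_smul,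
    zero_smul]

theorem IsCopConvInv.coregularMatrix_mul_eq_one (hρt : IsCopConvInv ρ ρt)
    (hx : IsMultiplicativeMatrix R x) : coregularMatrix ρt x * coregularMatrix ρ x = 1 := by
  ext1 i j
  simp_rw [Matrix.mul_apply, coregularMatrix, Matrix.map_apply, ← coregularAct_convMul, ← map_sum,
    hρt.sum_convMul (hx.comul_apply i j), map_smul, coregularAct_counit, hx.counit_apply,
    ite_smul, one_smul, zero_smul, Matrix.one_apply]

theorem IsDQT.isColumnEigenvector_pow (hρ : IsDQT ρ) (hx : IsMultiplicativeMatrix R x) {j : ι}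
    {b : A} {c : R} (hb : IsColumnEigenvector (coregularMatrix ρ x) j c b) (N : ℕ) :
    IsColumnEigenvector (coregularMatrix ρ x) j (c ^ N) (b ^ N) := fun i ↦ by
  induction N generalizing i with
  | zero => simp [hρ.coregularMatrix_one hx]
  | succ N ih =>
    simp [pow_succ', hρ.coregularMatrix_mul hx, hb _, ih, ite_mul, smul_smul]

theorem IsDQT.isColumnEigenvector_transpose_pow (hρ : IsDQT ρ) (hx : IsMultiplicativeMatrix R x)
    {j : ι} {b : A} {c : R} (hb : IsColumnEigenvector (coregularMatrix ρ x)ᵀ j c b) (N : ℕ) :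
    IsColumnEigenvector (coregularMatrix ρ x)ᵀ j (c ^ N) (b ^ N) := fun i ↦ by
  induction N generalizing i with
  | zero => simp [hρ.coregularMatrix_one hx, eq_comm]
  | succ N ih =>
    simp only [IsColumnEigenvector, Matrix.transpose_apply] at hb ih ⊢
    simp [pow_succ, hρ.coregularMatrix_mul hx, hb, ih, mul_ite, smul_smul, mul_comm c]

end DualQuasitriangular

section CovariantizedProduct

open Coalgebra
open scoped Matrix

variable {R : Type u} [CommRing R] {A : Type u} [Ring A] [Bialgebra R A]
  {ρ ρt : A →ₗ[R] A →ₗ[R] R} {cmul : A → A → A} {ι : Type*} [Fintype ι]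

theorem CovChar.eq_sum (hcmul : CovChar ρ ρt cmul) {a : A} {a1 a2 a3 : ι → A}
    (ha : comul2 (R := R) a = ∑ i, a1 i ⊗ₜ[R] (a2 i ⊗ₜ[R] a3 i)) (b : A) :
    cmul a b = ∑ i, a2 i * coregularAct (ρ (a1 i)) (coregularAct (ρt (a3 i)) b) := by
  obtain ⟨m, b1, b', hb⟩ := TensorProduct.exists_sum_tmul_eq (comul (R := R) b)
  choose k b2 b3 hb' using fun j ↦ TensorProduct.exists_sum_tmul_eq (comul (R := R) (b' j))
  have hbb : comul2 (R := R) b =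
      ∑ p : Σ j, Fin (k j), b1 p.1 ⊗ₜ[R] (b2 p.1 p.2 ⊗ₜ[R] b3 p.1 p.2) := by
    simp [comul2, hb, hb', TensorProduct.tmul_sum, Fintype.sum_sigma]
  obtain ⟨e, he⟩ := Countable.exists_injective_nat ι
  obtain ⟨d, hd⟩ := Countable.exists_injective_nat (Σ j, Fin (k j))
  have h := hcmul a b (Finset.univ.map ⟨e, he⟩) (Finset.univ.map ⟨d, hd⟩) (Function.extend e a1 0)
    (Function.extend e a2 0) (Function.extend e a3 0) (Function.extend d (fun p ↦ b1 p.1) 0)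
    (Function.extend d (fun p ↦ b2 p.1 p.2) 0) (Function.extend d (fun p ↦ b3 p.1 p.2) 0)
  simp only [Finset.sum_map, Function.Embedding.coeFn_mk, he.extend_apply, hd.extend_apply] at h
  simp [h ha hbb, coregularAct_eq_sum hb, coregularAct_eq_sum (hb' _), Fintype.sum_sigma,
    Finset.smul_sum, Finset.mul_sum, smul_smul]

variable [DecidableEq ι] {x : Matrix ι ι A}

theorem IsMultiplicativeMatrix.comul2_apply (hx : IsMultiplicativeMatrix R x) (i j : ι) :
    comul2 (R := R) (x i j) = ∑ p : ι × ι, x i p.1 ⊗ₜ[R] (x p.1 p.2 ⊗ₜ[R] x p.2 j) := by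
  simp [comul2, hx.comul_apply, TensorProduct.tmul_sum, Fintype.sum_prod_type]

theorem CovChar.cmul_eq_smul (hcmul : CovChar ρ ρt cmul) (hρt : IsCopConvInv ρ ρt)
    (hx : IsMultiplicativeMatrix R x) {k l : ι} {b : A} {c : Rˣ} {d : R}
    (hl : IsColumnEigenvector (coregularMatrix ρ x) l (c : R) b)
    (hk : IsColumnEigenvector (coregularMatrix ρ x)ᵀ k d b) :
    cmul (x k l) b = (↑c⁻¹ * d) • (x k l * b) := by
  have hl' := hl.of_mul_eq_one (hρt.coregularMatrix_mul_eq_one hx)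
  calc cmul (x k l) b
      = ∑ m, ∑ p, x m p * coregularMatrix ρ x k m (coregularMatrix ρt x p l b) := by
        rw [hcmul.eq_sum (hx.comul2_apply k l), Fintype.sum_prod_type]
        rfl
    _ = ∑ m, x m l * (↑c⁻¹ : R) • (coregularMatrix ρ x)ᵀ m k b := by
        simp [hl' _, apply_ite]
    _ = (↑c⁻¹ * d) • (x k l * b) := by
        simp only [hk _, smul_ite, smul_zero, mul_ite, mul_zero, mul_smul_comm, smul_smul]
        simp

theorem CovChar.cpow_eq_smul_pow (hcmul : CovChar ρ ρt cmul) (hρ : IsDQT ρ)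
    (hρt : IsCopConvInv ρ ρt) (hx : IsMultiplicativeMatrix R x) {k l : ι} {c : Rˣ} {d : R}
    (hl : IsColumnEigenvector (coregularMatrix ρ x) l (c : R) (x k l))
    (hk : IsColumnEigenvector (coregularMatrix ρ x)ᵀ k d (x k l)) (N : ℕ) :
    cpow cmul 1 (x k l) N = (↑c⁻¹ * d) ^ N.choose 2 • x k l ^ N := by
  have hmul (r : R) (N : ℕ) : cmul (x k l) (r • x k l ^ N) =
      (r * (↑c⁻¹ * d) ^ N) • x k l ^ (N + 1) := by
    have hlN := (hρ.isColumnEigenvector_pow hx hl N).smul r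
    rw [← Units.val_pow_eq_pow_val] at hlN
    rw [hcmul.cmul_eq_smul hρt hx hlN ((hρ.isColumnEigenvector_transpose_pow hx hk N).smul r),
      mul_smul_comm, smul_smul, ← pow_succ', mul_comm r, mul_pow, ← inv_pow,
      Units.val_pow_eq_pow_val]
  have hone : cmul (x k l) 1 = x k l := by simpa using hmul 1 0
  induction N with
  | zero => simp [cpow, cListProd]
  | succ N ih =>
    rw [cpow_succ hone, ih, hmul, ← pow_add, Nat.choose_succ_succ' N 1, Nat.choose_one_right,
      add_comm (N.choose 2)]

end CovariantizedProduct

section StandardRMatrix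

open scoped Matrix

variable {R : Type u} [CommRing R] {n : ℕ} {qr : Rˣ} {A : Type u} [Ring A] [Bialgebra R A]
  {x : Matrix (Fin n) (Fin n) A} {ρ : A →ₗ[R] A →ₗ[R] R}

theorem rmatVal_of_upper_ne_lower {j k : Fin n} (hkj : k ≠ j) (i l : Fin n) :
    RmatVal n qr i j k l = if i = j ∧ k = l then (↑qr⁻¹ : R) else 0 := by
  rcases eq_or_ne k l with rfl | hkl
  · simp [RmatVal, hkj, hkj.symm]
  · simp [RmatVal, hkj, hkl]

theorem rmatVal_of_upper_eq_upper (i j l : Fin n) :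
    RmatVal n qr i j i l = if i = j ∧ i = l then (↑(qr⁻¹ * qr ^ n) : R) else 0 := by
  rcases eq_or_ne i j with rfl | hij
  · rcases eq_or_ne i l with rfl | hil <;> simp [RmatVal, *]
  · simp [RmatVal, hij]

theorem isColumnEigenvector_generator (hx : IsMultiplicativeMatrix R x)
    (hρx : ∀ i j k l, ρ (x i j) (x k l) = RmatVal n qr i j k l) {k l : Fin n} (hkl : k ≠ l) :
    IsColumnEigenvector (coregularMatrix ρ x) l (↑qr⁻¹ : R) (x k l) := fun i ↦ by
  simp [hx.coregularMatrix_apply_apply, hρx, rmatVal_of_upper_ne_lower hkl, ite_and, ite_smul]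

theorem isColumnEigenvector_transpose_generator (hx : IsMultiplicativeMatrix R x)
    (hρx : ∀ i j k l, ρ (x i j) (x k l) = RmatVal n qr i j k l) (k l : Fin n) :
    IsColumnEigenvector (coregularMatrix ρ x)ᵀ k (↑(qr⁻¹ * qr ^ n) : R) (x k l) := fun i ↦ by
  simp [hx.coregularMatrix_apply_apply, hρx, rmatVal_of_upper_eq_upper, ite_and, eq_comm, ite_smul]

end StandardRMatrix

theorem offdiag_power_covariantized_general
    {R : Type u} [CommRing R] (n : ℕ) (qr : Rˣ)
    {A : Type u} [Ring A] [Bialgebra R A] (x : Fin n → Fin n → A)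
    (hΔ : ∀ i j, Coalgebra.comul (R := R) (x i j) = ∑ k, x i k ⊗ₜ[R] x k j)
    (hε : ∀ i j, Coalgebra.counit (R := R) (x i j) = if i = j then (1 : R) else 0)
    (ρ : A →ₗ[R] A →ₗ[R] R) (hρ : IsDQT ρ)
    (hρx : ∀ i j k l, ρ (x i j) (x k l) = RmatVal n qr i j k l)
    (ρt : A →ₗ[R] A →ₗ[R] R) (hρt : IsCopConvInv ρ ρt)
    (cmul : A → A → A) (hcmul : CovChar ρ ρt cmul)
    (k l : Fin n) (hkl : k ≠ l) (N : ℕ) :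
    x k l ^ N = qzpow (qr ^ n) (-((N * (N - 1) / 2 : ℕ) : ℤ)) • cpow cmul 1 (x k l) N := by
  have hx : IsMultiplicativeMatrix R x := ⟨hΔ, hε⟩
  have hpow : cpow cmul 1 (x k l) N = (↑((qr ^ n) ^ N.choose 2) : R) • x k l ^ N := by
    simpa using hcmul.cpow_eq_smul_pow hρ hρt hx (isColumnEigenvector_generator hx hρx hkl)
      (isColumnEigenvector_transpose_generator hx hρx k l) N
  rw [hpow, ← Nat.choose_two_right, qzpow, zpow_neg, zpow_natCast, smul_smul, Units.inv_mul,
    one_smul]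

/-- In the common underlying module of `O_q(M_n)` and `B_q(M_n)`, for `k ≠ l` the
powers of the generator `x^k_l` with respect to the original product and with
respect to the covariantized product `⬝` agree up to the scalar `q^{−N(N−1)/2}`:
`(x^k_l)^N = q^{−N(N−1)/2} (x^k_l)^{⬝N}`. -/
theorem offdiag_power_covariantized
    {R : Type u} [CommRing R] (n : ℕ) (hn : 2 ≤ n) (qr : Rˣ)
    {A : Type u} [Ring A] [Bialgebra R A] (x : Fin n → Fin n → A)
    (hx : OqMnRels n (qr ^ n) x)
    (hxuniv : ∀ (B : Type u) [Ring B] [Algebra R B] (y : Fin n → Fin n → B),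
      OqMnRels n (qr ^ n) y → ∃! f : A →ₐ[R] B, ∀ i j, f (x i j) = y i j)
    (hΔ : ∀ i j, Coalgebra.comul (R := R) (x i j) = ∑ k, x i k ⊗ₜ[R] x k j)
    (hε : ∀ i j, Coalgebra.counit (R := R) (x i j) = if i = j then (1 : R) else 0)
    (ρ : A →ₗ[R] A →ₗ[R] R) (hρ : IsDQT ρ)
    (hρx : ∀ i j k l, ρ (x i j) (x k l) = RmatVal n qr i j k l)
    (ρt : A →ₗ[R] A →ₗ[R] R) (hρt : IsCopConvInv ρ ρt)
    (cmul : A → A → A) (hcmul : CovChar ρ ρt cmul)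
    (k l : Fin n) (hkl : k ≠ l) (N : ℕ) :
    x k l ^ N = qzpow (qr ^ n) (-((N * (N - 1) / 2 : ℕ) : ℤ)) • cpow cmul 1 (x k l) N :=
  offdiag_power_covariantized_general n qr x hΔ hε ρ hρ hρx ρt hρt cmul hcmul k l hkl N

end
end
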